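/- Let F be a field, n a natural number, and P a zero–nonzero pattern on n×n positions. Then the maximum of rank A, taken over all n×n matrices A over F supported on P (A i j ≠ 0 only if P i j), equals the matching number of P, i.e., the largest k for which there exist a set s of row indices with |s| = k and a function σ injective on s with P i (σ i) for all i ∈ s. -/

import Mathlib

/-!
The upper bound on the rank is König's theorem: the entries of a pattern whose largest matching has
size `k` can be covered by `a` rows and `b` columns with `a + b = k`. A matrix supported on these
lines is a product `B * C` with `a + b` inner indices, so its rank is at most `k`. Conversely, the
partial permutation matrix of a matching of size `k` is supported on the pattern and has rank `k`.
König's theorem itself follows from Hall's: if a minimum cover consists of `d` fewer lines than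
there are rows, then adjoining `d` columns adjacent to every row makes Hall's condition hold, and at
most `d` rows are matched to the new columns.
-/

open Finset

section Matching

variable {m n : Type*} {P : m → n → Prop} {k : ℕ}

/-- The pattern `P`, viewed as a bipartite graph, has a matching with `k` edges; these are indexed
by `Fin k` so that rows and columns play symmetric roles. -/
def HasMatching (P : m → n → Prop) (k : ℕ) : Prop :=
  ∃ (f : Fin k ↪ m) (g : Fin k ↪ n), ∀ a, P (f a) (g a)

theorem HasMatching.of_injective {ι : Type*} [Fintype ι] {f : ι → m} {g : ι → n}
    (hf : f.Injective) (hg : g.Injective) (h : ∀ a, P (f a) (g a)) (hk : k ≤ Fintype.card ι) :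
    HasMatching P k :=
  let e : Fin k ↪ ι := (Fin.castLEEmb hk).trans (Fintype.equivFin ι).symm.toEmbedding
  ⟨e.trans ⟨f, hf⟩, e.trans ⟨g, hg⟩, fun _ => h _⟩

theorem HasMatching.mono {l : ℕ} (h : HasMatching P k) (hl : l ≤ k) : HasMatching P l :=
  let ⟨f, g, hP⟩ := h
  .of_injective f.injective g.injective hP (by simpa using hl)

theorem hasMatching_iff_exists_injOn [Nonempty (m → n)] :
    HasMatching P k ↔
      ∃ (s : Finset m) (σ : m → n), #s = k ∧ Set.InjOn σ s ∧ ∀ i ∈ s, P i (σ i) := by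
  constructor
  · rintro ⟨f, g, hP⟩
    have hσ (a : Fin k) : Function.extend f g (Classical.arbitrary (m → n)) (f a) = g a :=
      f.injective.extend_apply g _ a
    refine ⟨univ.map f, Function.extend f g (Classical.arbitrary (m → n)), by simp, ?_, ?_⟩
    · simp only [coe_map, coe_univ, Set.image_univ]
      rintro _ ⟨a, rfl⟩ _ ⟨b, rfl⟩ hab
      rw [hσ, hσ] at hab
      rw [g.injective hab]
    · simp [hσ, hP]
  · rintro ⟨s, σ, rfl, hσ, hP⟩
    exact .of_injective Subtype.val_injective hσ.injective (fun i => hP i i.2) (by simp)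

/-- The rows in `S` together with the columns in `T` contain all positions of the pattern `P`: a
vertex cover of `P` as a bipartite graph, the notion dual to `HasMatching` in König's theorem. -/
def IsLineCover (P : m → n → Prop) (S : Finset m) (T : Finset n) : Prop :=
  ∀ i j, P i j → i ∈ S ∨ j ∈ T

theorem hasMatching_card_sub_of_forall_card_le_add [Fintype m] [Fintype n] [DecidableRel P]
    {d : ℕ} (h : ∀ Y : Finset m, #Y ≤ #{j | ∃ i ∈ Y, P i j} + d) :
    HasMatching P (Fintype.card m - d) := by
  classical
  let Q (i : m) : n ⊕ Fin d → Prop := Sum.elim (P i) fun _ => True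
  have hall (Y : Finset m) : #Y ≤ #{x | ∃ i ∈ Y, Q i x} := by
    obtain rfl | ⟨i, hi⟩ := Y.eq_empty_or_nonempty
    · simp
    have hN : ({x | ∃ i ∈ Y, Q i x} : Finset (n ⊕ Fin d)) =
        ({j | ∃ i ∈ Y, P i j} : Finset n).disjSum univ := by
      ext (j | c)
      · simp [Q]
      · simpa [Q] using ⟨i, hi⟩
    simpa [hN] using h Y
  obtain ⟨φ, hφ, hQ⟩ := (Fintype.all_card_le_filter_rel_iff_exists_injective Q).1 hall
  let M : Finset (n ⊕ Fin d) := univ.map ⟨φ, hφ⟩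
  have hM (j : M.toLeft) : ∃ i, φ i = .inl j.1 := by
    obtain ⟨i, -, hi⟩ := mem_map.1 (mem_toLeft.1 j.2)
    exact ⟨i, hi⟩
  choose f hf using hM
  have hcard : Fintype.card m ≤ #M.toLeft + d :=
    calc Fintype.card m = #M.toLeft + #M.toRight := by
          rw [card_toLeft_add_card_toRight, card_map, card_univ]
      _ ≤ #M.toLeft + d := by simpa using card_le_univ M.toRight
  refine .of_injective (f := f) (g := Subtype.val) (fun j j' hj => ?_) Subtype.val_injective
    (fun j => ?_) (by rw [Fintype.card_coe]; omega)
  · exact Subtype.ext (Sum.inl_injective (by rw [← hf, ← hf, hj]))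
  · simpa [Q, hf] using hQ (f j)

theorem exists_isLineCover_hasMatching [Finite m] [Finite n] (P : m → n → Prop) :
    ∃ (S : Finset m) (T : Finset n), IsLineCover P S T ∧ HasMatching P (#S + #T) := by
  classical
  cases nonempty_fintype m
  cases nonempty_fintype n
  obtain ⟨⟨S, T⟩, hST, hmin⟩ := exists_min_image
    ({C | IsLineCover P C.1 C.2} : Finset (Finset m × Finset n)) (fun C => #C.1 + #C.2)
    ⟨(univ, ∅), mem_filter_univ _ |>.2 fun i _ _ => .inl (mem_univ i)⟩
  simp only [mem_filter_univ, Prod.forall] at hST hmin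
  have hrows : #S + #T ≤ Fintype.card m := by
    simpa using hmin univ ∅ fun i _ _ => .inl (mem_univ i)
  have hdef (Y : Finset m) :
      #Y ≤ #{j | ∃ i ∈ Y, P i j} + (Fintype.card m - (#S + #T)) := by
    have hcover : IsLineCover P Yᶜ {j | ∃ i ∈ Y, P i j} := fun i j hij => by
      by_cases hi : i ∈ Y
      · exact .inr (mem_filter_univ j |>.2 ⟨i, hi, hij⟩)
      · exact .inl (mem_compl.2 hi)
    have hle := hmin _ _ hcover
    have hcompl := card_add_card_compl Y
    omega
  exact ⟨S, T, hST,
    (hasMatching_card_sub_of_forall_card_le_add hdef).mono (Nat.sub_sub_self hrows).ge⟩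

end Matching

section Rank

variable {R m n : Type*} [CommSemiring R] [StrongRankCondition R] [Fintype n] {P : m → n → Prop}

theorem IsLineCover.rank_le {A : Matrix m n R} {S : Finset m} {T : Finset n}
    (h : IsLineCover (A · · ≠ 0) S T) : A.rank ≤ #S + #T := by
  classical
  let B : Matrix m (S ⊕ T) R := .fromCols
    ((1 : Matrix m m R).submatrix id (↑)) (.of fun i j => if i ∈ S then 0 else A i j)
  let C : Matrix (S ⊕ T) n R := .fromRows
    (A.submatrix (↑) id) ((1 : Matrix n n R).submatrix (↑) id)
  have hBC : A = B * C := by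
    ext i j
    have hzero (hi : i ∉ S) (hj : j ∉ T) : A i j = 0 :=
      of_not_not fun hij => (h i j hij).elim hi hj
    have hrows : ∑ s : S, (1 : Matrix m m R) i s * A s j = if i ∈ S then A i j else 0 := by
      rw [sum_coe_sort S fun s => (1 : Matrix m m R) i s * A s j]
      simp [Matrix.one_apply]
    have hcols : ∑ t : T, (if i ∈ S then 0 else A i t) * (1 : Matrix n n R) t j =
        if j ∈ T then (if i ∈ S then 0 else A i j) else 0 := by
      rw [sum_coe_sort T fun t => (if i ∈ S then 0 else A i t) * (1 : Matrix n n R) t j]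
      simp [Matrix.one_apply]
    have hsum : (B * C) i j = (if i ∈ S then A i j else 0) +
        if j ∈ T then (if i ∈ S then 0 else A i j) else 0 := by
      rw [← hrows, ← hcols, Matrix.mul_apply, Fintype.sum_sum_type]
      rfl
    rw [hsum]
    split_ifs with hi hj hj
    · exact (add_zero _).symm
    · exact (add_zero _).symm
    · exact (zero_add _).symm
    · rw [hzero hi hj, add_zero]
  calc A.rank ≤ B.rank := hBC ▸ B.rank_mul_le_left C
    _ ≤ #S + #T := by simpa using B.rank_le_card_width

theorem HasMatching.exists_supported_rank_eq {k : ℕ} (h : HasMatching P k) :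
    ∃ A : Matrix m n R, (∀ i j, A i j ≠ 0 → P i j) ∧ A.rank = k := by
  classical
  obtain ⟨f, g, hP⟩ := h
  let B : Matrix m (Fin k) R := (1 : Matrix m m R).submatrix id f
  let C : Matrix (Fin k) n R := (1 : Matrix n n R).submatrix g id
  have hone : (B * C).submatrix f g = 1 := by
    ext a b
    simp [B, C, Matrix.mul_apply, Matrix.one_apply]
  refine ⟨B * C, fun i j hij => ?_, le_antisymm ?_ ?_⟩
  · rw [Matrix.mul_apply] at hij
    obtain ⟨a, -, ha⟩ := exists_ne_zero_of_sum_ne_zero hij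
    obtain rfl : i = f a :=
      of_not_not fun h => left_ne_zero_of_mul ha (Matrix.one_apply_ne h)
    obtain rfl : g a = j :=
      of_not_not fun h => right_ne_zero_of_mul ha (Matrix.one_apply_ne h)
    exact hP a
  · simpa using (B.rank_mul_le_left C).trans B.rank_le_card_width
  · simpa [hone] using (B * C).rank_submatrix_le f g

theorem exists_supported_rank_eq_iff_hasMatching [Finite m] {r : ℕ} :
    (∃ A : Matrix m n R, (∀ i j, A i j ≠ 0 → P i j) ∧ A.rank = r) ↔ HasMatching P r := by
  refine ⟨?_, HasMatching.exists_supported_rank_eq⟩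
  rintro ⟨A, hA, rfl⟩
  obtain ⟨S, T, hcover, hmatching⟩ := exists_isLineCover_hasMatching P
  exact hmatching.mono (IsLineCover.rank_le fun i j hij => hcover i j (hA i j hij))

variable (R) in
theorem max_rank_supported_eq_matching_number_general [Finite m] (P : m → n → Prop) :
    sSup {r : ℕ | ∃ A : Matrix m n R, (∀ i j, A i j ≠ 0 → P i j) ∧ A.rank = r}
      = sSup {k : ℕ | HasMatching P k} := by
  simp only [exists_supported_rank_eq_iff_hasMatching]

end Rank

/-- Structural rank theorem: the maximum rank over all `n × n` matrices over a
field `F` supported on a zero–nonzero pattern `P` equals the matching number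
(term rank) of `P`. -/
theorem max_rank_supported_eq_matching_number {F : Type*} [Field F] {n : ℕ}
    (P : Fin n → Fin n → Prop) :
    sSup {r : ℕ | ∃ A : Matrix (Fin n) (Fin n) F,
        (∀ i j, A i j ≠ 0 → P i j) ∧ A.rank = r}
      = sSup {k : ℕ | ∃ (s : Finset (Fin n)) (σ : Fin n → Fin n),
          s.card = k ∧ Set.InjOn σ ↑s ∧ ∀ i ∈ s, P i (σ i)} := by
  have : Nonempty (Fin n → Fin n) := ⟨id⟩
  simpa only [hasMatching_iff_exists_injOn] using
    max_rank_supported_eq_matching_number_general F P
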